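/- Let 0 < γ < 2 and let n ≥ 1 be an integer. Define the polynomials P1(n,v) = (2n+γ)v³ − (2n+4+γ)v² + (2n+4+γ)v − (2n+γ), P2(n,v) = −(2n+γ)v³ + (6n+4−γ)v² + (6n+4−γ)v − (2n+γ), P3(n,v) = (2n+γ)v³ + (6n+4−γ)v² − (6n+4−γ)v − (2n+γ), P4(n,v) = −(2n+γ)v³ − (2n+4+γ)v² − (2n+4+γ)v − (2n+γ), and F(n,u,v) = (v+1)(u·P1(n,v) + P2(n,v)) / ((v−1)(u·P3(n,v) + P4(n,v))). Then for all u, v ∈ [0,1] with v ≠ 1 and u·P3(n,v) + P4(n,v) ≠ 0, one has F(n,u,v) ≥ −1. -/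

import Mathlib

noncomputable section

def P1 (γ : ℝ) (n : ℕ) (v : ℝ) : ℝ :=
  (2*(n:ℝ) + γ) * v^3 - (2*(n:ℝ) + 4 + γ) * v^2 + (2*(n:ℝ) + 4 + γ) * v - (2*(n:ℝ) + γ)

def P2 (γ : ℝ) (n : ℕ) (v : ℝ) : ℝ :=
  -(2*(n:ℝ) + γ) * v^3 + (6*(n:ℝ) + 4 - γ) * v^2 + (6*(n:ℝ) + 4 - γ) * v - (2*(n:ℝ) + γ)

def P3 (γ : ℝ) (n : ℕ) (v : ℝ) : ℝ :=
  (2*(n:ℝ) + γ) * v^3 + (6*(n:ℝ) + 4 - γ) * v^2 - (6*(n:ℝ) + 4 - γ) * v - (2*(n:ℝ) + γ)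

def P4 (γ : ℝ) (n : ℕ) (v : ℝ) : ℝ :=
  -(2*(n:ℝ) + γ) * v^3 - (2*(n:ℝ) + 4 + γ) * v^2 - (2*(n:ℝ) + 4 + γ) * v - (2*(n:ℝ) + γ)

/-- The recurrence function `F(n,u,v)` of the discrete Painlevé equation in the
coordinates `u = tan(α/2)`. -/
def F (γ : ℝ) (n : ℕ) (u v : ℝ) : ℝ :=
  (v + 1) * (u * P1 γ n v + P2 γ n v) / ((v - 1) * (u * P3 γ n v + P4 γ n v))

/-- On the unit square the recurrence function `F` takes values `≥ -1`. -/
theorem F_ge_neg_one (γ : ℝ) (hγ0 : 0 < γ) (hγ2 : γ < 2) (n : ℕ) (hn : 1 ≤ n)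
    (u v : ℝ) (hu : u ∈ Set.Icc (0:ℝ) 1) (hv : v ∈ Set.Icc (0:ℝ) 1)
    (hv1 : v ≠ 1) (hden : u * P3 γ n v + P4 γ n v ≠ 0) :
    -1 ≤ F γ n u v := by
  obtain ⟨hu0, hu1⟩ := hu
  obtain ⟨hv0, hv1'⟩ := hv
  have hvlt : v < 1 := lt_of_le_of_ne hv1' hv1
  have hn1 : (1:ℝ) ≤ (n:ℝ) := by exact_mod_cast hn
  unfold F
  have h3 : P3 γ n v ≤ 0 := by
    have e : P3 γ n v = -((2*(n:ℝ) + γ) * ((1 - v) * (1 + v + v^2))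
        + (6*(n:ℝ) + 4 - γ) * (v * (1 - v))) := by unfold P3; ring
    have a1 : 0 ≤ (2*(n:ℝ) + γ) * ((1 - v) * (1 + v + v^2)) :=
      mul_nonneg (by linarith) (mul_nonneg (by linarith) (by positivity))
    have a2 : 0 ≤ (6*(n:ℝ) + 4 - γ) * (v * (1 - v)) :=
      mul_nonneg (by linarith) (mul_nonneg hv0 (by linarith))
    linarith
  have h4 : P4 γ n v < 0 := by
    have e : P4 γ n v = -((2*(n:ℝ) + γ) * v^3 + (2*(n:ℝ) + 4 + γ) * v^2
        + (2*(n:ℝ) + 4 + γ) * v + (2*(n:ℝ) + γ)) := by unfold P4; ring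
    have : 0 < (2*(n:ℝ) + γ) * v^3 + (2*(n:ℝ) + 4 + γ) * v^2
        + (2*(n:ℝ) + 4 + γ) * v + (2*(n:ℝ) + γ) := by positivity
    linarith
  have hD : 0 < (v - 1) * (u * P3 γ n v + P4 γ n v) := by
    apply mul_pos_of_neg_of_neg (by linarith)
    have := mul_nonneg hu0 (neg_nonneg.mpr h3)
    linarith
  rw [le_div_iff₀ hD]
  have e : (v + 1) * (u * P1 γ n v + P2 γ n v) + (v - 1) * (u * P3 γ n v + P4 γ n v)
      = (1 - u) * ((4*(n:ℝ) - 2*γ) * v^3 + (4*(n:ℝ) + 8 - 2*γ) * v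
          + 2 * v^2 * ((2*(n:ℝ) + γ) * ((1 - v) * (1 + v)) + (4*(n:ℝ) + 4 - 2*γ)))
        + u * (2 * (4*(n:ℝ) - 2*γ) * v^3 + 2 * (4*(n:ℝ) + 8 - 2*γ) * v) := by
    unfold P1 P2 P3 P4; ring
  have b1 : 0 ≤ 4*(n:ℝ) - 2*γ := by linarith
  have b2 : 0 ≤ 4*(n:ℝ) + 8 - 2*γ := by linarith
  have b3 : 0 ≤ 4*(n:ℝ) + 4 - 2*γ := by linarith
  have b4 : 0 ≤ 1 - u := by linarith
  have b5 : 0 ≤ 1 - v := by linarith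
  have : 0 ≤ (v + 1) * (u * P1 γ n v + P2 γ n v) + (v - 1) * (u * P3 γ n v + P4 γ n v) := by
    rw [e]
    generalize 4*(n:ℝ) - 2*γ = x at *
    generalize 4*(n:ℝ) + 8 - 2*γ = y at *
    generalize 4*(n:ℝ) + 4 - 2*γ = z at *
    generalize 1 - u = p at *
    generalize 1 - v = q at *
    positivity
  linarith

end
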